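/- Let r > 1 and assume lim_{k→∞} k^d (log k)^r J_k exists and lies in (0,∞). Then for every p > 1 one has ν₀ > 0; equivalently, there exists a constant C > 0 such that Σ_n |u_n|^{p+1} ≤ C · M[u]^{(p−1)/2} ⟨Lu,u⟩ for every u ∈ ℓ²(Z^d). -/

import Mathlib

open scoped BigOperators
open Filter Topology

noncomputable section

/-- The `ℓ^∞` norm of a lattice point of `ℤ^d`, as a natural number. -/
def latNorm {d : ℕ} (m : Fin d → ℤ) : ℕ := Finset.univ.sup fun i => (m i).natAbs

/-- The summand `J_{|m|}` for `m ≠ 0` (and `0` for `m = 0`). -/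
def JbarSummand (d : ℕ) (J : ℕ → ℝ) (m : Fin d → ℤ) : ℝ :=
  if m = 0 then 0 else J (latNorm m)

/-- `J̄ = Σ_{m ≠ 0} J_{|m|}`. -/
def Jbar (d : ℕ) (J : ℕ → ℝ) : ℝ := ∑' m : Fin d → ℤ, JbarSummand d J m

/-- The quadratic form `⟨Lu,u⟩ = (1/2) Σ_n Σ_{m ≠ n} J_{|n-m|} |u_n - u_m|²`. -/
def pairing (d : ℕ) (J : ℕ → ℝ) (u : (Fin d → ℤ) → ℂ) : ℝ :=
  (1/2) * ∑' n : Fin d → ℤ, ∑' m : Fin d → ℤ,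
    if m = n then 0 else J (latNorm (n - m)) * ‖u n - u m‖ ^ 2

/-- The mass `M[u] = Σ_n |u_n|²`. -/
def mass (d : ℕ) (u : (Fin d → ℤ) → ℂ) : ℝ := ∑' n : Fin d → ℤ, ‖u n‖ ^ 2

/-- Membership in `ℓ²(ℤ^d)`. -/
def MemL2 (d : ℕ) (u : (Fin d → ℤ) → ℂ) : Prop := Summable fun n : Fin d → ℤ => ‖u n‖ ^ 2

/-- The potential term `Σ_n |u_n|^{p+1}`. -/
def ppot (d : ℕ) (p : ℝ) (u : (Fin d → ℤ) → ℂ) : ℝ := ∑' n : Fin d → ℤ, ‖u n‖ ^ (p + 1)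

/-- The energy `H[u] = (1/2)⟨Lu,u⟩ - (1/(p+1)) Σ_n |u_n|^{p+1}`. -/
def energy (d : ℕ) (J : ℕ → ℝ) (p : ℝ) (u : (Fin d → ℤ) → ℂ) : ℝ :=
  (1/2) * pairing d J u - (1/(p+1)) * ppot d p u

/-- `I_ν = inf {H[q] : q ∈ ℓ², M[q] = ν}`. -/
def Ifun (d : ℕ) (J : ℕ → ℝ) (p : ℝ) (ν : ℝ) : ℝ :=
  sInf {x : ℝ | ∃ q, MemL2 d q ∧ mass d q = ν ∧ energy d J p q = x}

/-- The Gagliardo–Nirenberg-type inequality at mass level `ν`: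
`Σ_n |q_n|^{p+1} ≤ ((p+1)/2) ν^{-(p-1)/2} M[q]^{(p-1)/2} ⟨Lq,q⟩` for all `q ∈ ℓ²`. -/
def GNineq (d : ℕ) (J : ℕ → ℝ) (p ν : ℝ) : Prop :=
  ∀ q : (Fin d → ℤ) → ℂ, MemL2 d q →
    ppot d p q ≤ ((p + 1) / 2) * ν ^ (-(p - 1) / 2) * (mass d q) ^ ((p - 1) / 2) *
      pairing d J q

/-- The excitation threshold `ν₀ = sup {ν > 0 : GN inequality holds at level ν}`,
with `ν₀ = 0` if no such `ν` exists. -/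
def nuZero (d : ℕ) (J : ℕ → ℝ) (p : ℝ) : ℝ :=
  sSup (insert 0 {ν : ℝ | 0 < ν ∧ GNineq d J p ν})

/-!
If a set `B` has at least `4 M / ‖u n‖²` points, where `M` is the mass of `u`, then `u` is smaller
than `u n` on average over `B`, and so `Σ_{m ∈ B} ‖u n - u m‖²` is at least `|B| ‖u n‖² / 4`.
Take for `B` a cube of side `N ~ (M / ‖u n‖²) ^ (1 / d)` at distance `N` from `n`. There the kernel
is at least a multiple of `N ^ (-d (p + 1) / 2)`, because the logarithm is beaten by any power, so
`Σ_m J_{|n-m|} ‖u n - u m‖² ≳ (N ^ d) ^ (-(p - 1) / 2) ‖u n‖² ~ M ^ (-(p - 1) / 2) ‖u n‖ ^ (p + 1)`.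
Summing over `n` gives the Gagliardo–Nirenberg inequality. Testing it on a unit mass at the origin
shows that the levels at which it holds are bounded, so `ν₀` is an honest supremum.
-/

section NormedGroup

variable {ι E : Type*} [SeminormedAddCommGroup E]

lemma half_norm_sq_sub_norm_sq_le (a b : E) : ‖a‖ ^ 2 / 2 - ‖b‖ ^ 2 ≤ ‖a - b‖ ^ 2 := by
  have htri : ‖a‖ ≤ ‖a - b‖ + ‖b‖ := by simpa using norm_add_le (a - b) b
  have hsq : ‖a‖ ^ 2 ≤ (‖a - b‖ + ‖b‖) ^ 2 := by gcongr
  linarith [add_sq_le (a := ‖a - b‖) (b := ‖b‖)]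

lemma norm_sub_sq_le_two_mul (a b : E) : ‖a - b‖ ^ 2 ≤ 2 * (‖a‖ ^ 2 + ‖b‖ ^ 2) := by
  have hsq : ‖a - b‖ ^ 2 ≤ (‖a‖ + ‖b‖) ^ 2 := by gcongr; exact norm_sub_le a b
  exact hsq.trans add_sq_le

lemma card_mul_norm_sq_div_four_le_sum_norm_sub_sq {B : Finset ι} {u : ι → E} {a : E}
    (h : 4 * ∑ m ∈ B, ‖u m‖ ^ 2 ≤ B.card * ‖a‖ ^ 2) :
    B.card * ‖a‖ ^ 2 / 4 ≤ ∑ m ∈ B, ‖a - u m‖ ^ 2 :=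
  calc B.card * ‖a‖ ^ 2 / 4 ≤ B.card * (‖a‖ ^ 2 / 2) - ∑ m ∈ B, ‖u m‖ ^ 2 := by linarith
    _ = ∑ m ∈ B, (‖a‖ ^ 2 / 2 - ‖u m‖ ^ 2) := by simp [Finset.sum_sub_distrib]
    _ ≤ ∑ m ∈ B, ‖a - u m‖ ^ 2 := by gcongr; exact half_norm_sq_sub_norm_sq_le _ _

lemma summable_mul_norm_sub_sq {G : Type*} [AddCommGroup G] {w : G → ℝ} (hw : ∀ x, 0 ≤ w x)
    (hws : Summable w) {u : G → E} (hu : Summable fun x => ‖u x‖ ^ 2) :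
    Summable fun x : G × G => w (x.1 - x.2) * ‖u x.1 - u x.2‖ ^ 2 := by
  have hprod : Summable fun x : G × G => w x.1 * ‖u x.2‖ ^ 2 :=
    hws.mul_of_nonneg hu hw fun _ => sq_nonneg _
  have hfst : Summable fun x : G × G => w (x.1 - x.2) * ‖u x.1‖ ^ 2 :=
    hprod.comp_injective (i := fun x : G × G => (x.1 - x.2, x.1)) fun x y hxy => by
      simp only [Prod.mk.injEq] at hxy
      exact Prod.ext hxy.2 (sub_right_injective (hxy.2 ▸ hxy.1))
  have hsnd : Summable fun x : G × G => w (x.1 - x.2) * ‖u x.2‖ ^ 2 :=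
    hprod.comp_injective (i := fun x : G × G => (x.1 - x.2, x.2)) fun x y hxy => by
      simp only [Prod.mk.injEq] at hxy
      exact Prod.ext (sub_left_injective (hxy.2 ▸ hxy.1)) hxy.2
  refine .of_nonneg_of_le (fun x => mul_nonneg (hw _) (sq_nonneg _)) (fun x => ?_)
    ((hfst.add hsnd).mul_left 2)
  calc w (x.1 - x.2) * ‖u x.1 - u x.2‖ ^ 2
      ≤ w (x.1 - x.2) * (2 * (‖u x.1‖ ^ 2 + ‖u x.2‖ ^ 2)) :=
        mul_le_mul_of_nonneg_left (norm_sub_sq_le_two_mul _ _) (hw _)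
    _ = 2 * (w (x.1 - x.2) * ‖u x.1‖ ^ 2 + w (x.1 - x.2) * ‖u x.2‖ ^ 2) := by ring

end NormedGroup

section Lattice

variable {d : ℕ} {n m : Fin d → ℤ} {N : ℕ}

lemma latNorm_zero : latNorm (0 : Fin d → ℤ) = 0 := by simp [latNorm]

lemma natAbs_le_latNorm (m : Fin d → ℤ) (i : Fin d) : (m i).natAbs ≤ latNorm m :=
  Finset.le_sup (f := fun i => (m i).natAbs) (Finset.mem_univ i)

/-- The cube `n + [N, 2N)^d` of side `N`, placed at `ℓ^∞` distance `N` from `n`. -/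
def distantCube (n : Fin d → ℤ) (N : ℕ) : Finset (Fin d → ℤ) :=
  Fintype.piFinset fun i => Finset.Ico (n i + N) (n i + 2 * N)

lemma mem_distantCube : m ∈ distantCube n N ↔ ∀ i, n i + N ≤ m i ∧ m i < n i + 2 * N := by
  simp [distantCube]

lemma card_distantCube (n : Fin d → ℤ) (N : ℕ) : (distantCube n N).card = N ^ d := by
  have hside (i : Fin d) : (n i + 2 * N - (n i + N)).toNat = N := by omega
  simp only [distantCube, Fintype.card_piFinset, Int.card_Ico, hside, Finset.prod_const,
    Finset.card_univ, Fintype.card_fin]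

lemma le_latNorm_sub_of_mem_distantCube (hd : 1 ≤ d) (hm : m ∈ distantCube n N) :
    N ≤ latNorm (n - m) := by
  have hcoord := mem_distantCube.1 hm ⟨0, hd⟩
  have hle := natAbs_le_latNorm (n - m) ⟨0, hd⟩
  rw [Pi.sub_apply] at hle
  omega

lemma latNorm_sub_le_of_mem_distantCube (hm : m ∈ distantCube n N) :
    latNorm (n - m) ≤ 2 * N := by
  refine Finset.sup_le fun i _ => ?_
  have hcoord := mem_distantCube.1 hm i
  rw [Pi.sub_apply]
  omega

lemma mul_norm_sq_le_sum_distantCube {E : Type*} [SeminormedAddCommGroup E] (hd : 1 ≤ d)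
    {w : (Fin d → ℤ) → ℝ} {K : ℕ} {c β : ℝ} (hc : 0 ≤ c) (hβ : 0 ≤ β)
    (hw : ∀ m, K < latNorm m → c * (latNorm m : ℝ) ^ (-β) ≤ w m) (hKN : K < N)
    {u : (Fin d → ℤ) → E}
    (hmass : 4 * ∑ m ∈ distantCube n N, ‖u m‖ ^ 2 ≤ (N : ℝ) ^ d * ‖u n‖ ^ 2) :
    c * (2 * N : ℝ) ^ (-β) * ((N : ℝ) ^ d * ‖u n‖ ^ 2 / 4)
      ≤ ∑ m ∈ distantCube n N, w (n - m) * ‖u n - u m‖ ^ 2 := by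
  have hcard : ((distantCube n N).card : ℝ) = (N : ℝ) ^ d := by
    rw [card_distantCube, Nat.cast_pow]
  have hkernel : ∀ m ∈ distantCube n N, c * (2 * N : ℝ) ^ (-β) ≤ w (n - m) := by
    intro m hm
    have hlow : K < latNorm (n - m) := hKN.trans_le (le_latNorm_sub_of_mem_distantCube hd hm)
    have hpos : (0 : ℝ) < latNorm (n - m) := by exact_mod_cast hlow.pos
    have hup : (latNorm (n - m) : ℝ) ≤ 2 * N := by
      exact_mod_cast latNorm_sub_le_of_mem_distantCube hm
    refine le_trans ?_ (hw _ hlow)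
    exact mul_le_mul_of_nonneg_left
      (Real.rpow_le_rpow_of_nonpos hpos hup (neg_nonpos.2 hβ)) hc
  calc c * (2 * N : ℝ) ^ (-β) * ((N : ℝ) ^ d * ‖u n‖ ^ 2 / 4)
      ≤ c * (2 * N : ℝ) ^ (-β) * ∑ m ∈ distantCube n N, ‖u n - u m‖ ^ 2 := by
        rw [← hcard] at hmass ⊢
        gcongr
        exact card_mul_norm_sq_div_four_le_sum_norm_sub_sq hmass
    _ ≤ ∑ m ∈ distantCube n N, w (n - m) * ‖u n - u m‖ ^ 2 := by
        rw [Finset.mul_sum]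
        gcongr with m hm
        exact hkernel m hm

end Lattice

section RealPowers

lemma natCast_lt_mul_half_add_one {d : ℕ} (hd : 1 ≤ d) {p : ℝ} (hp : 1 < p) :
    (d : ℝ) < d * ((p + 1) / 2) :=
  lt_mul_of_one_lt_right (by exact_mod_cast hd) (by linarith)

lemma eventually_half_mul_rpow_neg_le_of_tendsto {J : ℕ → ℝ} {a β r A : ℝ} (hA : 0 < A)
    (hlim : Tendsto (fun k : ℕ => (k : ℝ) ^ a * Real.log k ^ r * J k) atTop (𝓝 A))
    (hβ : a < β) :
    ∀ᶠ k : ℕ in atTop, A / 2 * (k : ℝ) ^ (-β) ≤ J k := by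
  have hlog : ∀ᶠ k : ℕ in atTop, ‖Real.log k ^ r‖ ≤ 1 * ‖(k : ℝ) ^ (β - a)‖ :=
    ((isLittleO_log_rpow_rpow_atTop r (sub_pos.2 hβ)).comp_tendsto
      tendsto_natCast_atTop_atTop).bound zero_lt_one
  filter_upwards [hlim.eventually (lt_mem_nhds (half_lt_self hA)), hlog, eventually_gt_atTop 1]
    with k hk hlogk hk1
  have hkpos : (0 : ℝ) < k := by exact_mod_cast hk1.pos
  have hlogpos : 0 < Real.log k := Real.log_pos (by exact_mod_cast hk1)
  have hJk : 0 < J k := pos_of_mul_pos_right ((half_pos hA).trans hk) (by positivity)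
  rw [one_mul, Real.norm_of_nonneg (by positivity), Real.norm_of_nonneg (by positivity)] at hlogk
  rw [Real.rpow_neg hkpos.le, ← div_eq_mul_inv, div_le_iff₀ (by positivity)]
  calc A / 2 ≤ (k : ℝ) ^ a * Real.log k ^ r * J k := hk.le
    _ ≤ (k : ℝ) ^ a * (k : ℝ) ^ (β - a) * J k := by gcongr
    _ = J k * (k : ℝ) ^ β := by rw [← Real.rpow_add hkpos, add_sub_cancel, mul_comm]

lemma exists_nat_lt_and_pow_mul_mem_Icc {d : ℕ} (hd : d ≠ 0) (K : ℕ) {x y : ℝ} (hy : 0 < y)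
    (hyx : y ≤ x) : ∃ N : ℕ, K < N ∧ (N : ℝ) ^ d * y ∈ Set.Icc x ((2 * (K + 1)) ^ d * x) := by
  set z : ℝ := (x / y) ^ (d : ℝ)⁻¹
  have hone : 1 ≤ x / y := (one_le_div hy).2 hyx
  have hz : 1 ≤ z := Real.one_le_rpow hone (by positivity)
  have hzd : z ^ d * y = x := by
    rw [Real.rpow_inv_natCast_pow (by linarith) hd, div_mul_cancel₀ _ hy.ne']
  have hceil : (⌈z⌉₊ : ℝ) ≤ 2 * z := by linarith [Nat.ceil_lt_add_one (by linarith : 0 ≤ z)]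
  have hceil_pos : 0 < ⌈z⌉₊ := Nat.ceil_pos.2 (by linarith)
  refine ⟨(K + 1) * ⌈z⌉₊, Nat.le_mul_of_pos_right _ hceil_pos, ?_, ?_⟩ <;> push_cast
  · calc x = z ^ d * y := hzd.symm
      _ ≤ ((K + 1) * (⌈z⌉₊ : ℝ)) ^ d * y := by
        gcongr
        exact (Nat.le_ceil z).trans (le_mul_of_one_le_left (by positivity) (by simp))
  · calc ((K + 1) * (⌈z⌉₊ : ℝ)) ^ d * y ≤ ((K + 1) * (2 * z)) ^ d * y := by gcongr
      _ = (2 * (K + 1)) ^ d * x := by rw [← hzd]; simp only [mul_pow]; ring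

lemma two_mul_rpow_neg_mul_pow (d : ℕ) {x : ℝ} (hx : 0 < x) (p : ℝ) :
    (2 * x) ^ (-(d * ((p + 1) / 2))) * x ^ d
      = 2 ^ (-(d * ((p + 1) / 2))) * (x ^ d) ^ (-((p - 1) / 2)) := by
  rw [Real.mul_rpow zero_le_two hx.le, mul_assoc, ← Real.rpow_natCast, ← Real.rpow_add hx,
    ← Real.rpow_mul hx.le]
  ring_nf

lemma rpow_add_one_le_of_mul_sq_le {V M C a p : ℝ} (hV : 0 < V) (hM : 0 ≤ M) (hC : 0 ≤ C)
    (ha : 0 < a) (hp : 1 ≤ p) (h : V * a ^ 2 ≤ C * M) :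
    a ^ (p + 1) ≤ C ^ ((p - 1) / 2) * (M ^ ((p - 1) / 2) * V ^ (-((p - 1) / 2)) * a ^ 2) := by
  have hpow : V ^ ((p - 1) / 2) * a ^ (p - 1) ≤ C ^ ((p - 1) / 2) * M ^ ((p - 1) / 2) :=
    calc V ^ ((p - 1) / 2) * a ^ (p - 1) = (V * a ^ 2) ^ ((p - 1) / 2) := by
          rw [Real.mul_rpow hV.le (by positivity), ← Real.rpow_natCast_mul ha.le]
          ring_nf
      _ ≤ (C * M) ^ ((p - 1) / 2) := by gcongr
      _ = C ^ ((p - 1) / 2) * M ^ ((p - 1) / 2) := Real.mul_rpow hC hM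
  calc a ^ (p + 1) = V ^ (-((p - 1) / 2)) * (V ^ ((p - 1) / 2) * a ^ (p - 1)) * a ^ 2 := by
        rw [← mul_assoc, ← Real.rpow_add hV, neg_add_cancel, Real.rpow_zero, one_mul,
          ← Real.rpow_natCast, ← Real.rpow_add ha]
        push_cast
        ring_nf
    _ ≤ V ^ (-((p - 1) / 2)) * (C ^ ((p - 1) / 2) * M ^ ((p - 1) / 2)) * a ^ 2 := by gcongr
    _ = _ := by ring

end RealPowers

section GagliardoNirenberg

variable {d : ℕ} {J : ℕ → ℝ} {p : ℝ}

lemma exists_mul_norm_rpow_le_tsum {E : Type*} [SeminormedAddCommGroup E] (hd : 1 ≤ d)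
    (hp : 1 ≤ p) {w : (Fin d → ℤ) → ℝ} (hw₀ : ∀ m, 0 ≤ w m) {K : ℕ} {c : ℝ} (hc : 0 < c)
    (hw : ∀ m, K < latNorm m → c * (latNorm m : ℝ) ^ (-(d * ((p + 1) / 2))) ≤ w m) :
    ∃ b : ℝ, 0 < b ∧ ∀ u : (Fin d → ℤ) → E, (Summable fun m => ‖u m‖ ^ 2) → ∀ n,
      (Summable fun m => w (n - m) * ‖u n - u m‖ ^ 2) →
      b * ‖u n‖ ^ (p + 1) ≤
        (∑' m, ‖u m‖ ^ 2) ^ ((p - 1) / 2) * ∑' m, w (n - m) * ‖u n - u m‖ ^ 2 := by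
  set s : ℝ := (p - 1) / 2 with hs
  set β : ℝ := d * ((p + 1) / 2) with hβ
  set C : ℝ := (2 * (K + 1)) ^ d * 4
  refine ⟨c * 2 ^ (-β) / 4 / C ^ s, by positivity, fun u hu n hsum => ?_⟩
  set M : ℝ := ∑' m, ‖u m‖ ^ 2
  have hCs : 0 < C ^ s := by positivity
  have hM : 0 ≤ M := tsum_nonneg fun m => sq_nonneg _
  rcases (norm_nonneg (u n)).eq_or_lt with hzero | hpos
  · rw [← hzero, Real.zero_rpow (by linarith), mul_zero]
    exact mul_nonneg (by positivity) (tsum_nonneg fun m => mul_nonneg (hw₀ _) (sq_nonneg _))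
  have hM_ge : ‖u n‖ ^ 2 ≤ M := hu.le_tsum n fun _ _ => sq_nonneg _
  obtain ⟨N, hKN, hlow, hup⟩ := exists_nat_lt_and_pow_mul_mem_Icc (x := 4 * M)
    (y := ‖u n‖ ^ 2) (Nat.ne_of_gt hd) K (by positivity) (by linarith)
  rw [← mul_assoc] at hup
  have hN : (0 : ℝ) < N := by exact_mod_cast hKN.pos
  have hcube : 4 * ∑ m ∈ distantCube n N, ‖u m‖ ^ 2 ≤ (N : ℝ) ^ d * ‖u n‖ ^ 2 := by
    linarith [hu.sum_le_tsum (distantCube n N) fun _ _ => sq_nonneg _]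
  calc c * 2 ^ (-β) / 4 / C ^ s * ‖u n‖ ^ (p + 1)
      ≤ c * 2 ^ (-β) / 4 / C ^ s *
          (C ^ s * (M ^ s * ((N : ℝ) ^ d) ^ (-s) * ‖u n‖ ^ 2)) := by
        gcongr
        exact rpow_add_one_le_of_mul_sq_le (by positivity) hM (by positivity) hpos hp hup
    _ = M ^ s * (c * (2 ^ (-β) * ((N : ℝ) ^ d) ^ (-s)) * (‖u n‖ ^ 2 / 4)) := by field_simp
    _ = M ^ s * (c * (2 * N : ℝ) ^ (-β) * ((N : ℝ) ^ d * ‖u n‖ ^ 2 / 4)) := by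
        rw [hβ, hs, ← two_mul_rpow_neg_mul_pow d hN p]
        ring
    _ ≤ M ^ s * ∑ m ∈ distantCube n N, w (n - m) * ‖u n - u m‖ ^ 2 := by
        gcongr
        exact mul_norm_sq_le_sum_distantCube hd hc.le (by positivity) hw hKN hcube
    _ ≤ M ^ s * ∑' m, w (n - m) * ‖u n - u m‖ ^ 2 := by
        gcongr
        exact hsum.sum_le_tsum _ fun _ _ => mul_nonneg (hw₀ _) (sq_nonneg _)

lemma JbarSummand_of_ne_zero {m : Fin d → ℤ} (hm : m ≠ 0) :
    JbarSummand d J m = J (latNorm m) :=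
  if_neg hm

lemma JbarSummand_nonneg (hJ : ∀ k, 0 ≤ J k) (m : Fin d → ℤ) : 0 ≤ JbarSummand d J m := by
  unfold JbarSummand
  split_ifs
  exacts [le_rfl, hJ _]

lemma pairing_eq_tsum_JbarSummand (u : (Fin d → ℤ) → ℂ) :
    pairing d J u = 1 / 2 * ∑' n, ∑' m, JbarSummand d J (n - m) * ‖u n - u m‖ ^ 2 := by
  have hterm (n m : Fin d → ℤ) :
      (if m = n then 0 else J (latNorm (n - m)) * ‖u n - u m‖ ^ 2)
        = JbarSummand d J (n - m) * ‖u n - u m‖ ^ 2 := by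
    split_ifs with h
    · simp [h]
    · rw [JbarSummand_of_ne_zero (sub_ne_zero.2 (Ne.symm h))]
  simp only [pairing, hterm]

theorem exists_ppot_le_mul_mass_rpow_mul_pairing (hd : 1 ≤ d) (hp : 1 ≤ p) (hJ : ∀ k, 0 ≤ J k)
    (hJbar : Summable (JbarSummand d J)) {c : ℝ} (hc : 0 < c)
    (hlow : ∀ᶠ k : ℕ in atTop, c * (k : ℝ) ^ (-(d * ((p + 1) / 2))) ≤ J k) :
    ∃ C : ℝ, 0 < C ∧ ∀ u : (Fin d → ℤ) → ℂ, MemL2 d u →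
      ppot d p u ≤ C * mass d u ^ ((p - 1) / 2) * pairing d J u := by
  obtain ⟨K, hK⟩ := eventually_atTop.1 hlow
  have hkernel (m : Fin d → ℤ) (hm : K < latNorm m) :
      c * (latNorm m : ℝ) ^ (-(d * ((p + 1) / 2))) ≤ JbarSummand d J m := by
    have hm₀ : m ≠ 0 := by
      rintro rfl
      simp [latNorm_zero] at hm
    exact (hK _ hm.le).trans_eq (JbarSummand_of_ne_zero hm₀).symm
  obtain ⟨b, hb, hbound⟩ :=
    exists_mul_norm_rpow_le_tsum (E := ℂ) hd hp (JbarSummand_nonneg hJ) hc hkernel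
  refine ⟨2 / b, by positivity, fun u hu => ?_⟩
  have hsum := summable_mul_norm_sub_sq (JbarSummand_nonneg hJ) hJbar hu
  set S : (Fin d → ℤ) → ℝ := fun n => ∑' m, JbarSummand d J (n - m) * ‖u n - u m‖ ^ 2
  have hpoint (n : Fin d → ℤ) : ‖u n‖ ^ (p + 1) ≤ b⁻¹ * mass d u ^ ((p - 1) / 2) * S n := by
    rw [mul_assoc, le_inv_mul_iff₀ hb]
    exact hbound u hu n (hsum.prod_factor n)
  have hS : Summable fun n => b⁻¹ * mass d u ^ ((p - 1) / 2) * S n := hsum.prod.mul_left _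
  calc ppot d p u ≤ ∑' n, b⁻¹ * mass d u ^ ((p - 1) / 2) * S n :=
        (hS.of_nonneg_of_le (fun n => by positivity) hpoint).tsum_le_tsum hpoint hS
    _ = 2 / b * mass d u ^ ((p - 1) / 2) * pairing d J u := by
        rw [tsum_mul_left, pairing_eq_tsum_JbarSummand]
        ring

end GagliardoNirenberg

section ExcitationThreshold

variable {d : ℕ} {J : ℕ → ℝ} {p : ℝ}

lemma hasSum_apply_single {ι M : Type*} [DecidableEq ι] [Zero M] {f : M → ℝ} (hf : f 0 = 0)
    (i : ι) (x : M) : HasSum (fun j => f ((Pi.single i x : ι → M) j)) (f x) := by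
  simpa using hasSum_single (f := fun j => f ((Pi.single i x : ι → M) j)) i
    fun j hj => by simp [hj, hf]

lemma GNineq.le_rpow_inv (hp : 1 < p) {ν : ℝ} (hν : 0 < ν) (h : GNineq d J p ν) :
    ν ≤ ((p + 1) / 2 * pairing d J (Pi.single 0 1)) ^ ((p - 1) / 2)⁻¹ := by
  have hsq : HasSum (fun n => ‖(Pi.single 0 1 : (Fin d → ℤ) → ℂ) n‖ ^ 2) 1 := by
    simpa using hasSum_apply_single (f := fun z : ℂ => ‖z‖ ^ (2 : ℕ)) (by simp) (0 : Fin d → ℤ) 1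
  have hpow : HasSum (fun n => ‖(Pi.single 0 1 : (Fin d → ℤ) → ℂ) n‖ ^ (p + 1)) 1 := by
    simpa using hasSum_apply_single (f := fun z : ℂ => ‖z‖ ^ (p + 1))
      (by simp [Real.zero_rpow (by linarith : p + 1 ≠ 0)]) (0 : Fin d → ℤ) 1
  have htest := h _ hsq.summable
  rw [ppot, hpow.tsum_eq, mass, hsq.tsum_eq, Real.one_rpow, mul_one, neg_div,
    Real.rpow_neg hν.le, mul_right_comm, ← div_eq_mul_inv, one_le_div (by positivity)] at htest
  have hs : 0 < (p - 1) / 2 := by linarith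
  rwa [Real.le_rpow_inv_iff_of_pos hν.le ((by positivity : 0 ≤ ν ^ ((p - 1) / 2)).trans htest) hs]

lemma bddAbove_insert_zero_GNineq (hp : 1 < p) :
    BddAbove (insert 0 {ν : ℝ | 0 < ν ∧ GNineq d J p ν}) :=
  BddAbove.insert 0 ⟨_, fun _ hν => hν.2.le_rpow_inv hp hν.1⟩

lemma exists_mul_rpow_neg_eq (hp : 1 < p) {C : ℝ} (hC : 0 < C) :
    ∃ ν : ℝ, 0 < ν ∧ (p + 1) / 2 * ν ^ (-(p - 1) / 2) = C := by
  have hbase : 0 < 2 * C / (p + 1) := by positivity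
  have hexp : -(p - 1) / 2 ≠ 0 := by linarith
  refine ⟨(2 * C / (p + 1)) ^ (-(p - 1) / 2)⁻¹, by positivity, ?_⟩
  rw [Real.rpow_inv_rpow hbase.le hexp]
  field_simp

theorem nuZero_pos_iff (hp : 1 < p) :
    0 < nuZero d J p ↔ ∃ C : ℝ, 0 < C ∧ ∀ u : (Fin d → ℤ) → ℂ, MemL2 d u →
      ppot d p u ≤ C * mass d u ^ ((p - 1) / 2) * pairing d J u := by
  constructor
  · intro hpos
    obtain ⟨ν, rfl | ⟨hν, hGN⟩, hν'⟩ := exists_lt_of_lt_csSup (Set.insert_nonempty _ _) hpos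
    · exact absurd hν' (lt_irrefl 0)
    · exact ⟨_, mul_pos (by linarith) (Real.rpow_pos_of_pos hν _), hGN⟩
  · rintro ⟨C, hC, hineq⟩
    obtain ⟨ν, hν, rfl⟩ := exists_mul_rpow_neg_eq hp hC
    exact hν.trans_le (le_csSup (bddAbove_insert_zero_GNineq hp) (Or.inr ⟨hν, hineq⟩))

end ExcitationThreshold

theorem stmt11_general {d : ℕ} (hd : 1 ≤ d) {p : ℝ} (hp : 1 < p) {J : ℕ → ℝ}
    (hJpos : ∀ k, 0 ≤ J k) (hJbar : Summable (JbarSummand d J)) {c : ℝ} (hc : 0 < c)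
    (hlow : ∀ᶠ k : ℕ in atTop, c * (k : ℝ) ^ (-(d * ((p + 1) / 2))) ≤ J k) :
    0 < nuZero d J p ∧
      ∃ C : ℝ, 0 < C ∧ ∀ u : (Fin d → ℤ) → ℂ, MemL2 d u →
        ppot d p u ≤ C * (mass d u) ^ ((p - 1) / 2) * pairing d J u := by
  have hGN := exists_ppot_le_mul_mass_rpow_mul_pairing hd hp.le hJpos hJbar hc hlow
  exact ⟨(nuZero_pos_iff hp).2 hGN, hGN⟩

theorem stmt11 (d : ℕ) (hd : 1 ≤ d) (p : ℝ) (hp : 1 < p) (J : ℕ → ℝ)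
    (hJpos : ∀ k, 0 ≤ J k) (hJbar : Summable (JbarSummand d J))
    (r : ℝ) (hr : 1 < r)
    (horder : ∃ A : ℝ, 0 < A ∧
      Tendsto (fun k : ℕ => (k : ℝ) ^ (d : ℝ) * Real.log k ^ r * J k) atTop (𝓝 A)) :
    0 < nuZero d J p ∧
      ∃ C : ℝ, 0 < C ∧ ∀ u : (Fin d → ℤ) → ℂ, MemL2 d u →
        ppot d p u ≤ C * (mass d u) ^ ((p - 1) / 2) * pairing d J u := by
  obtain ⟨A, hA, hlim⟩ := horder
  exact stmt11_general hd hp hJpos hJbar (half_pos hA)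
    (eventually_half_mul_rpow_neg_le_of_tendsto hA hlim (natCast_lt_mul_half_add_one hd hp))
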